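/- arXiv:0802.2581 — 2 statements merged into one kernel-verified Lean document; each statement's English description precedes it below -/
import Mathlib

section
/- Let Δ be a finite index set partitioned into disjoint nonempty subsets A, B, and S, let n be a positive real number, let K be a symmetric positive definite real matrix indexed by Δ with K_{AB} = 0, and let W_{SS} be a symmetric positive definite matrix indexed by S such that n (K^{-1})_{SS} = W_{SS}. Set V := A ∪ S and V' := B ∪ S. Then K = [((K^{-1})_{VV})^{-1}]^Δ + [((K^{-1})_{V'V'})^{-1}]^Δ − n [(W_{SS})^{-1}]^Δ; that is, a concentration matrix vanishing on A × B and whose inverse matches W/n on the separator S decomposes into its two marginal pieces minus the zero-padded scaled inverse of W_{SS}. -/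
open Matrix

/-- The `Δ1 × Δ2` submatrix of a matrix `A` indexed by `Δ`. -/
def msub {Δ : Type*} (A : Matrix Δ Δ ℝ) (Δ1 Δ2 : Finset Δ) : Matrix Δ1 Δ2 ℝ :=
  A.submatrix (fun i => (i : Δ)) (fun j => (j : Δ))

/-- `[M]^Δ`: the `Δ × Δ` matrix obtained by padding a `V × V` matrix `M` with zeros. -/
def pad {Δ : Type*} (V : Finset Δ) [DecidablePred (· ∈ V)] (M : Matrix V V ℝ) :
    Matrix Δ Δ ℝ :=
  Matrix.of fun i j => if h : i ∈ V ∧ j ∈ V then M ⟨i, h.1⟩ ⟨j, h.2⟩ else 0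

/-!
If `x` inverts a unit `u` of a ring in the corner of `p`, then `u - u x u` inverts `u⁻¹` in the
corner of `1 - p`: this is the Schur complement formula, freed from blocks. Applied to `K⁻¹` and
the projection onto `S`, it yields an inverse `w` of `K` in the corner of `p + q`, where `p` and `q`
are the projections onto `A` and `B`. As `K` is block diagonal on `A ∪ B`, `w` is the sum of the
inverses `p w p` and `q w q` of `K` in the corners of `p` and `q`. By the formula again, the three
summands of the decomposition are `K - K (q w q) K`, `K - K (p w p) K` and `K - K w K`.
-/

/-- `x` is the inverse of the compression `p * a * p` in the corner `p * R * p` of `R`, extended by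
zero. For `p` a coordinate projection of a matrix ring this is the zero-padded inverse of a
principal submatrix. The identities force `p` to be idempotent. -/
structure IsCornerInverse {R : Type*} [Mul R] (p a x : R) : Prop where
  proj_mul : p * x = x
  mul_proj : x * p = x
  proj_mul_mul : p * a * x = p
  mul_mul_proj : x * a * p = p

namespace IsCornerInverse

theorem unique {R : Type*} [Semigroup R] {p a x y : R}
    (hx : IsCornerInverse p a x) (hy : IsCornerInverse p a y) : x = y :=
  calc
    x = x * (p * a * y) := by rw [hy.proj_mul_mul, hx.mul_proj]
    _ = x * p * a * y := by simp only [mul_assoc]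
    _ = x * a * (p * y) := by rw [hx.mul_proj, hy.proj_mul]
    _ = x * a * p * y := by simp only [mul_assoc]
    _ = y := by rw [hx.mul_mul_proj, hy.proj_mul]

section NonUnitalSemiring

variable {R : Type*} [NonUnitalSemiring R] {p q a x y : R}

theorem compress (hp : IsIdempotentElem p) (hpq : p * q = 0) (hqp : q * p = 0)
    (hpaq : p * a * q = 0) (hqap : q * a * p = 0) (h : IsCornerInverse (p + q) a x) :
    IsCornerInverse p a (p * x * p) := by
  have mul_sum : p * (p + q) = p := by rw [mul_add, hp.eq, hpq, add_zero]
  have sum_mul : (p + q) * p = p := by rw [add_mul, hp.eq, hqp, add_zero]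
  have mul_sum_eq : p * a * (p + q) = p * a * p := by rw [mul_add, hpaq, add_zero]
  have sum_mul_eq : (p + q) * a * p = p * a * p := by rw [add_mul, add_mul, hqap, add_zero]
  refine ⟨?_, ?_, ?_, ?_⟩
  · rw [← mul_assoc, ← mul_assoc, hp.eq]
  · rw [mul_assoc, hp.eq]
  · calc
      p * a * (p * x * p) = p * a * p * x * p := by simp only [mul_assoc]
      _ = p * a * x * p := by rw [← mul_sum_eq, mul_assoc _ (p + q), h.proj_mul]
      _ = p * ((p + q) * a * x) * p := by simp only [← mul_assoc, mul_sum]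
      _ = p := by rw [h.proj_mul_mul, mul_sum, hp.eq]
  · calc
      p * x * p * a * p = p * x * (p * a * p) := by simp only [mul_assoc]
      _ = p * (x * (p + q)) * a * p := by rw [← sum_mul_eq]; simp only [mul_assoc]
      _ = p * (x * a * (p + q)) * p := by rw [h.mul_proj]; simp only [mul_assoc, sum_mul]
      _ = p := by rw [h.mul_mul_proj, mul_sum, hp.eq]

theorem add (hpq : p * q = 0) (hqp : q * p = 0) (hpaq : p * a * q = 0) (hqap : q * a * p = 0)
    (hx : IsCornerInverse p a x) (hy : IsCornerInverse q a y) :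
    IsCornerInverse (p + q) a (x + y) where
  proj_mul := by
    have hpy : p * y = 0 := by rw [← hy.proj_mul, ← mul_assoc, hpq, zero_mul]
    have hqx : q * x = 0 := by rw [← hx.proj_mul, ← mul_assoc, hqp, zero_mul]
    rw [add_mul, mul_add, mul_add, hx.proj_mul, hy.proj_mul, hpy, hqx, add_zero, zero_add]
  mul_proj := by
    have hxq : x * q = 0 := by rw [← hx.mul_proj, mul_assoc, hpq, mul_zero]
    have hyp : y * p = 0 := by rw [← hy.mul_proj, mul_assoc, hqp, mul_zero]
    rw [add_mul, mul_add, mul_add, hx.mul_proj, hy.mul_proj, hxq, hyp, add_zero, zero_add]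
  proj_mul_mul := by
    have hpay : p * a * y = 0 := by rw [← hy.proj_mul, ← mul_assoc, hpaq, zero_mul]
    have hqax : q * a * x = 0 := by rw [← hx.proj_mul, ← mul_assoc, hqap, zero_mul]
    rw [add_mul, add_mul, mul_add, mul_add, hx.proj_mul_mul, hy.proj_mul_mul, hpay, hqax,
      add_zero, zero_add]
  mul_mul_proj := by
    have hxaq : x * a * q = 0 := by rw [← hx.mul_proj, mul_assoc x, mul_assoc x, hpaq, mul_zero]
    have hyap : y * a * p = 0 := by rw [← hy.mul_proj, mul_assoc y, mul_assoc y, hqap, mul_zero]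
    rw [add_mul, add_mul, mul_add, mul_add, hx.mul_mul_proj, hy.mul_mul_proj, hxaq, hyap,
      add_zero, zero_add]

end NonUnitalSemiring

section Ring

variable {R : Type*} [Ring R] {p q x z : R} {u : Rˣ}

theorem schurComplement (h : IsCornerInverse p (u : R) x) :
    IsCornerInverse (1 - p) (↑u⁻¹ : R) (u - u * x * u) where
  proj_mul := by
    have : p * (u * x * u) = p * u := by rw [← mul_assoc, ← mul_assoc, h.proj_mul_mul]
    rw [sub_mul, one_mul, mul_sub, this, sub_self, sub_zero]
  mul_proj := by
    have : u * x * u * p = u * p := by rw [mul_assoc, mul_assoc, ← mul_assoc x, h.mul_mul_proj]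
    rw [mul_sub, mul_one, sub_mul, this, sub_self, sub_zero]
  proj_mul_mul := by
    have : ↑u⁻¹ * (u - u * x * u) = 1 - x * u := by
      rw [mul_sub, mul_assoc, u.inv_mul_cancel_left, u.inv_mul]
    rw [mul_assoc, this, mul_sub, mul_one, ← mul_assoc, sub_mul 1 p x, one_mul, h.proj_mul,
      sub_self, zero_mul, sub_zero]
  mul_mul_proj := by
    have : (u - u * x * u) * ↑u⁻¹ = 1 - u * x := by
      rw [sub_mul, u.mul_inv_cancel_right, u.mul_inv]
    rw [this, sub_mul, one_mul, mul_assoc, mul_sub x 1 p, mul_one, h.mul_proj, sub_self, mul_zero,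
      sub_zero]

theorem exists_eq_add_sub (hp : IsIdempotentElem p) (hq : IsIdempotentElem q)
    (hpq : p * q = 0) (hqp : q * p = 0) (hpuq : p * u * q = 0) (hqup : q * u * p = 0)
    (hz : IsCornerInverse (1 - (p + q)) (↑u⁻¹ : R) z) :
    ∃ x y, IsCornerInverse (1 - q) (↑u⁻¹ : R) x ∧ IsCornerInverse (1 - p) (↑u⁻¹ : R) y ∧
      (u : R) = x + y - z := by
  obtain ⟨w, hw, huwu⟩ : ∃ w, IsCornerInverse (p + q) (u : R) w ∧ u * w * u = u - z :=
    ⟨↑u⁻¹ - ↑u⁻¹ * z * ↑u⁻¹, by simpa using hz.schurComplement,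
      by simp [mul_sub, sub_mul, mul_assoc]⟩
  have hwp : IsCornerInverse p (u : R) (p * w * p) := hw.compress hp hpq hqp hpuq hqup
  have hwq : IsCornerInverse q (u : R) (q * w * q) :=
    (add_comm p q ▸ hw).compress hq hqp hpq hqup hpuq
  have hsum : p * w * p + q * w * q = w := (hwp.add hpq hqp hpuq hqup hwq).unique hw
  refine ⟨_, _, hwq.schurComplement, hwp.schurComplement, ?_⟩
  calc
    (u : R) = u + u - (u - z) - z := by abel
    _ = u + u - u * (p * w * p + q * w * q) * u - z := by rw [hsum, huwu]
    _ = _ := by rw [mul_add, add_mul]; abel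

end Ring

end IsCornerInverse

/-- The zero-padding `[M]^Δ` of a `V × V` matrix, over any coefficients with a zero; for real
matrices it is definitionally `pad`. In particular `zeroPad V 1` is the coordinate projection
onto `V`. -/
def zeroPad {Δ R : Type*} [Zero R] (V : Finset Δ) [DecidablePred (· ∈ V)] (M : Matrix V V R) :
    Matrix Δ Δ R :=
  of fun i j => if h : i ∈ V ∧ j ∈ V then M ⟨i, h.1⟩ ⟨j, h.2⟩ else 0

section ZeroPad

variable {Δ R : Type*} [DecidableEq Δ]

theorem zeroPad_injective [Zero R] (V : Finset Δ) :
    Function.Injective (zeroPad V : Matrix V V R → Matrix Δ Δ R) := by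
  intro M N h
  ext i j
  simpa [zeroPad] using congrFun₂ h i j

theorem zeroPad_smul {α : Type*} [Zero R] [SMulZeroClass α R] (V : Finset Δ) (c : α)
    (M : Matrix V V R) :
    zeroPad V (c • M) = c • zeroPad V M := by
  ext i j
  simp [zeroPad]

theorem zeroPad_one [Zero R] [One R] (V : Finset Δ) :
    zeroPad V (1 : Matrix V V R) = diagonal fun i => if i ∈ V then 1 else 0 := by
  ext i j
  simp only [zeroPad, of_apply, diagonal_apply, one_apply, Subtype.mk.injEq]
  grind

theorem zeroPad_one_union [AddMonoidWithOne R] {U V : Finset Δ} (h : Disjoint U V) :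
    zeroPad (U ∪ V) (1 : Matrix _ _ R) = zeroPad U 1 + zeroPad V 1 := by
  simp only [zeroPad_one, diagonal_add, Finset.mem_union]
  congr 1 with i
  have : i ∈ U → i ∉ V := fun hU => Finset.disjoint_left.1 h hU
  by_cases hU : i ∈ U <;> simp_all

variable [Fintype Δ]

theorem zeroPad_mul_zeroPad [NonUnitalNonAssocSemiring R] (V : Finset Δ) (M N : Matrix V V R) :
    zeroPad V M * zeroPad V N = zeroPad V (M * N) := by
  ext i j
  calc
    ∑ k, zeroPad V M i k * zeroPad V N k j = ∑ k ∈ V, zeroPad V M i k * zeroPad V N k j :=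
      (Finset.sum_subset V.subset_univ fun k _ hk => by simp [zeroPad, hk]).symm
    _ = ∑ k : V, zeroPad V M i k * zeroPad V N k j := (Finset.sum_coe_sort V _).symm
    _ = zeroPad V (M * N) i j := by
      by_cases hi : i ∈ V <;> by_cases hj : j ∈ V <;> simp [zeroPad, mul_apply, hi, hj]

theorem zeroPad_one_mul_mul_zeroPad_one [Semiring R] (V : Finset Δ) (M : Matrix Δ Δ R) :
    zeroPad V 1 * M * zeroPad V 1 =
      zeroPad V (M.submatrix ((↑) : V → Δ) ((↑) : V → Δ)) := by
  ext i j
  simp only [zeroPad_one, mul_diagonal, diagonal_mul]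
  simp only [zeroPad, of_apply, submatrix_apply]
  by_cases hi : i ∈ V <;> by_cases hj : j ∈ V <;> simp [hi, hj]

theorem zeroPad_one_mul_mul_zeroPad_one_eq_zero [Semiring R] {U V : Finset Δ} {M : Matrix Δ Δ R}
    (h : M.submatrix ((↑) : U → Δ) ((↑) : V → Δ) = 0) :
    zeroPad U 1 * M * zeroPad V 1 = 0 := by
  ext i j
  simp only [zeroPad_one, mul_diagonal, diagonal_mul, Matrix.zero_apply]
  have hM (hi : i ∈ U) (hj : j ∈ V) : M i j = 0 := congrFun₂ h ⟨i, hi⟩ ⟨j, hj⟩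
  by_cases hi : i ∈ U <;> by_cases hj : j ∈ V <;> simp [hi, hj, hM]

theorem isIdempotentElem_zeroPad_one [Semiring R] (V : Finset Δ) :
    IsIdempotentElem (zeroPad V (1 : Matrix V V R)) := by
  rw [IsIdempotentElem, zeroPad_mul_zeroPad, one_mul]

theorem zeroPad_one_mul_zeroPad_one_eq_zero [Semiring R] {U V : Finset Δ} (h : Disjoint U V) :
    zeroPad U (1 : Matrix U U R) * zeroPad V 1 = 0 := by
  have h_off_diag : (1 : Matrix Δ Δ R).submatrix ((↑) : U → Δ) ((↑) : V → Δ) = 0 := by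
    ext i j
    exact one_apply_ne (Finset.disjoint_iff_ne.1 h i i.2 j j.2)
  simpa only [mul_one] using zeroPad_one_mul_mul_zeroPad_one_eq_zero h_off_diag

variable [CommRing R] {V : Finset Δ} {M X : Matrix Δ Δ R}

theorem isCornerInverse_zeroPad_inv
    (h : IsUnit (M.submatrix ((↑) : V → Δ) ((↑) : V → Δ))) :
    IsCornerInverse (zeroPad V 1) M
      (zeroPad V (M.submatrix ((↑) : V → Δ) ((↑) : V → Δ))⁻¹) := by
  have hdet := (isUnit_iff_isUnit_det _).1 h
  have one_mul_pad (N : Matrix V V R) : zeroPad V 1 * zeroPad V N = zeroPad V N := by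
    rw [zeroPad_mul_zeroPad, one_mul]
  have pad_mul_one (N : Matrix V V R) : zeroPad V N * zeroPad V 1 = zeroPad V N := by
    rw [zeroPad_mul_zeroPad, mul_one]
  refine ⟨one_mul_pad _, pad_mul_one _, ?_, ?_⟩
  · rw [← one_mul_pad (_)⁻¹, ← mul_assoc, zeroPad_one_mul_mul_zeroPad_one, zeroPad_mul_zeroPad,
      mul_nonsing_inv _ hdet]
  · rw [← pad_mul_one (_)⁻¹, mul_assoc, mul_assoc, ← mul_assoc (zeroPad V 1),
      zeroPad_one_mul_mul_zeroPad_one, zeroPad_mul_zeroPad, nonsing_inv_mul _ hdet]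

theorem IsCornerInverse.eq_zeroPad_inv (h : IsCornerInverse (zeroPad V 1) M X) :
    X = zeroPad V (M.submatrix ((↑) : V → Δ) ((↑) : V → Δ))⁻¹ := by
  have hX : zeroPad V (X.submatrix (↑) (↑)) = X := by
    rw [← zeroPad_one_mul_mul_zeroPad_one, h.proj_mul, h.mul_proj]
  have hMX : M.submatrix (↑) (↑) * X.submatrix (↑) (↑) = (1 : Matrix V V R) := by
    apply zeroPad_injective V
    rw [← zeroPad_mul_zeroPad, ← zeroPad_one_mul_mul_zeroPad_one, hX, mul_assoc, h.proj_mul,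
      h.proj_mul_mul]
  rw [inv_eq_right_inv hMX, hX]

end ZeroPad

theorem stmt_14_general {Δ R : Type*} [Fintype Δ] [DecidableEq Δ] [CommRing R]
    (A B S : Finset Δ) (hAB : Disjoint A B) (hAS : Disjoint A S) (hBS : Disjoint B S)
    (hunion : A ∪ B ∪ S = Finset.univ) (n : R) (K : Matrix Δ Δ R) (hK : IsUnit K)
    (hKAB : K.submatrix ((↑) : A → Δ) ((↑) : B → Δ) = 0)
    (hKBA : K.submatrix ((↑) : B → Δ) ((↑) : A → Δ) = 0)
    (W : Matrix S S R) (hW : IsUnit W)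
    (hWS : n • K⁻¹.submatrix ((↑) : S → Δ) ((↑) : S → Δ) = W) :
    K = zeroPad (A ∪ S) (K⁻¹.submatrix (↑) (↑))⁻¹ + zeroPad (B ∪ S) (K⁻¹.submatrix (↑) (↑))⁻¹ -
      n • zeroPad S W⁻¹ := by
  have hWinv : K⁻¹.submatrix (↑) (↑) * n • W⁻¹ = (1 : Matrix S S R) := by
    rw [Matrix.mul_smul, ← Matrix.smul_mul, hWS, mul_nonsing_inv _ ((isUnit_iff_isUnit_det _).1 hW)]
  have hsum : zeroPad A 1 + zeroPad B 1 + zeroPad S 1 = (1 : Matrix Δ Δ R) := by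
    have hABS : Disjoint (A ∪ B) S := Finset.disjoint_union_left.2 ⟨hAS, hBS⟩
    rw [← zeroPad_one_union hAB, ← zeroPad_one_union hABS, zeroPad_one]
    simp [hunion]
  have hS : zeroPad S (1 : Matrix S S R) = 1 - (zeroPad A 1 + zeroPad B 1) := by
    rw [← hsum]; abel
  have hV : zeroPad (A ∪ S) (1 : Matrix _ _ R) = 1 - zeroPad B 1 := by
    rw [zeroPad_one_union hAS, ← hsum]; abel
  have hV' : zeroPad (B ∪ S) (1 : Matrix _ _ R) = 1 - zeroPad A 1 := by
    rw [zeroPad_one_union hBS, ← hsum]; abel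
  obtain ⟨u, rfl⟩ := hK
  have hz := isCornerInverse_zeroPad_inv (.of_mul_eq_one _ hWinv)
  rw [hS, ← coe_units_inv] at hz
  obtain ⟨X, Y, hX, hY, hK_eq⟩ := hz.exists_eq_add_sub
    (isIdempotentElem_zeroPad_one A) (isIdempotentElem_zeroPad_one B)
    (zeroPad_one_mul_zeroPad_one_eq_zero hAB) (zeroPad_one_mul_zeroPad_one_eq_zero hAB.symm)
    (zeroPad_one_mul_mul_zeroPad_one_eq_zero hKAB) (zeroPad_one_mul_mul_zeroPad_one_eq_zero hKBA)
  rw [← hV, coe_units_inv] at hX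
  rw [← hV', coe_units_inv] at hY
  rwa [hX.eq_zeroPad_inv, hY.eq_zeroPad_inv, coe_units_inv, inv_eq_right_inv hWinv,
    zeroPad_smul] at hK_eq

/-- A concentration matrix vanishing on `A × B` and whose inverse matches `W/n` on
the separator `S` decomposes into its two marginal pieces minus the zero-padded
scaled inverse of `W_{SS}`. -/
theorem stmt_14 {Δ : Type*} [Fintype Δ] [DecidableEq Δ]
    (A B S : Finset Δ)
    (hAB : Disjoint A B) (hAS : Disjoint A S) (hBS : Disjoint B S)
    (hunion : A ∪ B ∪ S = Finset.univ)
    (hA : A.Nonempty) (hB : B.Nonempty) (hS : S.Nonempty)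
    (n : ℝ) (hn : 0 < n)
    (K : Matrix Δ Δ ℝ) (hsymm : K.IsSymm) (hK : K.PosDef)
    (hzero : msub K A B = 0)
    (W : Matrix S S ℝ) (hWsymm : W.IsSymm) (hW : W.PosDef)
    (hWS : n • msub K⁻¹ S S = W)
    (V V' : Finset Δ) (hV : V = A ∪ S) (hV' : V' = B ∪ S) :
    K = pad V ((msub K⁻¹ V V)⁻¹) + pad V' ((msub K⁻¹ V' V')⁻¹) - n • pad S W⁻¹ := by
  subst hV hV'
  have hzero' : msub K B A = 0 := by simpa [msub, hsymm.eq] using congrArg transpose hzero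
  exact stmt_14_general A B S hAB hAS hBS hunion n K hK.isUnit hzero hzero' W hW.isUnit hWS
end

section
/- Let K be a symmetric positive definite real matrix indexed by a finite set Δ, let δ ∈ Δ, set Q1 := Δ \ {δ}, and suppose Q ⊆ Q1 and Q2 := Q1 \ Q satisfy k_{iδ} = 0 for all i ∈ Q2. Define K' to be the matrix indexed by Q1 that agrees with K_{Q1Q1} outside the Q × Q block and whose Q × Q block equals K_{QQ} − (k_{δδ})^{-1} K_{Qδ} K_{δQ}. Then K' = ((K^{-1})_{Q1Q1})^{-1}; that is, when the column of δ vanishes off Q, the global Schur-complement elimination of δ coincides with the local rank-one update performed only on the Q × Q block. -/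
open Matrix

/-!
Split the indices of `K` into those kept and those eliminated, and let `A`, `B`, `C`, `D` be the
blocks of `K`. If `X` and `Z` are the blocks of `K⁻¹` in the kept columns, then `K * K⁻¹ = 1` gives
`A X + B Z = 1` and `C X + D Z = 0`. Solving the second equation for `Z` yields
`(A - B D⁻¹ C) X = 1`, so the Schur complement of `D` inverts `X`. Its correction term `B D⁻¹ C`
vanishes in every row where `B` does and in every column where `C` does, which is why eliminating
`δ` changes only the `Q × Q` block.
-/

section SchurComplement

variable {n R : Type*} [Fintype n] [DecidableEq n] [CommRing R]

/-- The Schur complement in `K` of its diagonal block on the indices outside `p`, that is, the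
matrix on the indices in `p` left after eliminating all the others. It has its usual meaning only
if that block is invertible, since otherwise the inverse in it is `0`. -/
noncomputable def schurComplement (K : Matrix n n R) (p : n → Prop) [DecidablePred p] :
    Matrix {i // p i} {i // p i} R :=
  K.toBlock p p -
    K.toBlock p (fun i => ¬p i) * (K.toBlock (fun i => ¬p i) (fun i => ¬p i))⁻¹ *
      K.toBlock (fun i => ¬p i) p

variable {K : Matrix n n R} {p : n → Prop} [DecidablePred p]

theorem schurComplement_mul_toBlock_inv (hK : IsUnit K.det)
    (hD : IsUnit (K.toBlock (fun i => ¬p i) (fun i => ¬p i)).det) :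
    schurComplement K p * K⁻¹.toBlock p p = 1 := by
  set A := K.toBlock p p
  set B := K.toBlock p (fun i => ¬p i)
  set C := K.toBlock (fun i => ¬p i) p
  set D := K.toBlock (fun i => ¬p i) (fun i => ¬p i)
  set X := K⁻¹.toBlock p p
  set Z := K⁻¹.toBlock (fun i => ¬p i) p
  have hinner : A * X + B * Z = 1 := by
    rw [← toBlock_mul_eq_add, mul_nonsing_inv K hK, toBlock_one_self]
  have houter : C * X + D * Z = 0 := by
    rw [← toBlock_mul_eq_add, mul_nonsing_inv K hK]
    exact toBlock_one_disjoint disjoint_compl_left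
  calc (A - B * D⁻¹ * C) * X = A * X - B * (D⁻¹ * (C * X)) := by
        simp only [Matrix.sub_mul, Matrix.mul_assoc]
    _ = A * X + B * (D⁻¹ * (D * Z)) := by
        rw [eq_neg_of_add_eq_zero_left houter, Matrix.mul_neg, Matrix.mul_neg, sub_neg_eq_add]
    _ = 1 := by rw [nonsing_inv_mul_cancel_left _ _ hD, hinner]

theorem schurComplement_eq_inv_toBlock_inv (hK : IsUnit K.det)
    (hD : IsUnit (K.toBlock (fun i => ¬p i) (fun i => ¬p i)).det) :
    schurComplement K p = (K⁻¹.toBlock p p)⁻¹ :=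
  (inv_eq_left_inv (schurComplement_mul_toBlock_inv hK hD)).symm

theorem schurComplement_apply_of_row_eq_zero {i : {i // p i}} (hi : ∀ k, ¬p k → K i k = 0)
    (j : {i // p i}) : schurComplement K p i j = K i j := by
  rw [schurComplement, Matrix.mul_assoc, Matrix.sub_apply, toBlock_apply, sub_eq_self,
    Matrix.mul_apply]
  exact Finset.sum_eq_zero fun k _ => mul_eq_zero_of_left (hi k k.2) _

theorem schurComplement_apply_of_col_eq_zero (i : {i // p i}) {j : {i // p i}}
    (hj : ∀ k, ¬p k → K k j = 0) : schurComplement K p i j = K i j := by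
  rw [schurComplement, Matrix.sub_apply, toBlock_apply, sub_eq_self, Matrix.mul_apply]
  exact Finset.sum_eq_zero fun k _ => mul_eq_zero_of_right _ (hj k k.2)

end SchurComplement

section SingleIndex

variable {n : Type*} {p : n → Prop} {δ : n}

/-- The subtype of indices outside `p` has one element when `p` misses exactly `δ`; the default
element is `δ` by definition. -/
abbrev uniqueNotOfIffEq (hp : ∀ i, ¬p i ↔ i = δ) : Unique {i // ¬p i} where
  default := ⟨δ, (hp δ).2 rfl⟩
  uniq i := Subtype.ext ((hp i).1 i.2)

variable [Fintype n] [DecidableEq n] [DecidablePred p]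

theorem det_toBlock_not_of_not_iff_eq {R : Type*} [CommRing R] (K : Matrix n n R)
    (hp : ∀ i, ¬p i ↔ i = δ) :
    (K.toBlock (fun i => ¬p i) (fun i => ¬p i)).det = K δ δ :=
  let _ := uniqueNotOfIffEq hp
  det_unique _

theorem schurComplement_apply_of_not_iff_eq {F : Type*} [Field F] (K : Matrix n n F)
    (hp : ∀ i, ¬p i ↔ i = δ) (i j : {i // p i}) :
    schurComplement K p i j = K i j - (K δ δ)⁻¹ * (K i δ * K δ j) := by
  let _ := uniqueNotOfIffEq hp
  have hdefault : ((default : {i // ¬p i}) : n) = δ := rfl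
  simp only [schurComplement, Matrix.sub_apply, toBlock_apply, Matrix.mul_apply, inv_subsingleton,
    Fintype.sum_unique, diagonal_apply_eq, Ring.inverse_eq_inv', hdefault]
  ring

end SingleIndex

theorem stmt_15_general {Δ F : Type*} [Fintype Δ] [DecidableEq Δ] [Field F]
    {K : Matrix Δ Δ F} (hK : IsUnit K.det) {δ : Δ} (hδ : K δ δ ≠ 0)
    {Q1 Q : Finset Δ} (hQ1 : Q1 = Finset.univ.erase δ)
    (hcol : ∀ i ∈ Q1 \ Q, K i δ = 0) (hrow : ∀ j ∈ Q1 \ Q, K δ j = 0)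
    {K' : Matrix Q1 Q1 F}
    (hout : ∀ i j : Q1, ¬(↑i ∈ Q ∧ ↑j ∈ Q) → K' i j = K ↑i ↑j)
    (hin : ∀ i j : Q1, ↑i ∈ Q → ↑j ∈ Q →
      K' i j = K ↑i ↑j - (K δ δ)⁻¹ * (K ↑i δ * K δ ↑j)) :
    K' = (K⁻¹.toBlock (· ∈ Q1) (· ∈ Q1))⁻¹ := by
  have hnot_mem : ∀ k, k ∉ Q1 ↔ k = δ := by simp [hQ1]
  have hlocal : K' = schurComplement K (· ∈ Q1) := by
    ext i j
    by_cases hi : ↑i ∈ Q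
    · by_cases hj : ↑j ∈ Q
      · rw [hin i j hi hj, schurComplement_apply_of_not_iff_eq K hnot_mem]
      · rw [hout i j (fun h => hj h.2), schurComplement_apply_of_col_eq_zero]
        intro k hk
        rw [(hnot_mem k).1 hk, hrow j (Finset.mem_sdiff.2 ⟨j.2, hj⟩)]
    · rw [hout i j (fun h => hi h.1), schurComplement_apply_of_row_eq_zero]
      intro k hk
      rw [(hnot_mem k).1 hk, hcol i (Finset.mem_sdiff.2 ⟨i.2, hi⟩)]
  have hdet : IsUnit (K.toBlock (· ∉ Q1) (· ∉ Q1)).det := by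
    rw [det_toBlock_not_of_not_iff_eq K hnot_mem]
    exact hδ.isUnit
  rw [hlocal]
  -- The goal and the lemma use different `Fintype` instances on `Q1`.
  convert schurComplement_eq_inv_toBlock_inv hK hdet

/-- When the column of `δ` vanishes off `Q`, the global Schur-complement elimination
of `δ` coincides with the local rank-one update performed only on the `Q × Q` block. -/
theorem stmt_15 {Δ : Type*} [Fintype Δ] [DecidableEq Δ]
    (K : Matrix Δ Δ ℝ) (hsymm : K.IsSymm) (hK : K.PosDef)
    (δ : Δ) (Q1 Q Q2 : Finset Δ) (hQ1 : Q1 = Finset.univ.erase δ)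
    (hQ : Q ⊆ Q1) (hQ2 : Q2 = Q1 \ Q) (hzero : ∀ i ∈ Q2, K i δ = 0)
    (K' : Matrix Q1 Q1 ℝ)
    (hout : ∀ i j : Q1, ¬(↑i ∈ Q ∧ ↑j ∈ Q) → K' i j = K ↑i ↑j)
    (hin : ∀ i j : Q1, ↑i ∈ Q → ↑j ∈ Q →
      K' i j = K ↑i ↑j - (K δ δ)⁻¹ * (K ↑i δ * K δ ↑j)) :
    K' = (msub K⁻¹ Q1 Q1)⁻¹ := by
  subst hQ2
  exact stmt_15_general hK.det_pos.ne'.isUnit hK.diag_pos.ne' hQ1 hzero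
    (fun j hj => (hsymm.apply j δ).trans (hzero j hj)) hout hin
end
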